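/- arXiv:2504.02208 — 2 statements merged into one kernel-verified Lean document; each statement's English description precedes it below -/
import Mathlib

section
/- For all β > 0, σ > 0 and ω ∈ ℝ, the improper integral ∫_{βσ²/2}^{∞} (1/(√(2π) · √(2x/β − σ²))) · exp(−βx/4 − ω²/(2(2x/β − σ²))) dx converges and equals exp(−σ²β²/8) · exp(−|ω|β/2). -/
open MeasureTheory

/-!
Substituting `x = β (σ² + y²) / 2` turns the integral into a multiple of
`∫₀^∞ exp (-p (y² + c² / y²)) dy` with `p = β² / 8` and `c = 2 |ω| / β`. Since
`y² + c² / y² = (y - c / y)² + 2 c`, this is a Gaussian integral in the variable `y - c / y`, and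
the Cauchy–Schlömilch transformation says that the integral over `(0, ∞)` of an even function does
not change when `y` is replaced by `y - c / y`.
-/

open Set Real

section CauchySchlomilch

variable {E : Type*} [NormedAddCommGroup E] [NormedSpace ℝ E] {c : ℝ} {f : ℝ → E}

lemma hasDerivAt_sub_div (c : ℝ) {x : ℝ} (hx : x ≠ 0) :
    HasDerivAt (fun x ↦ x - c / x) (1 + c / x ^ 2) x := by
  refine ((hasDerivAt_id x).sub ((hasDerivAt_inv hx).const_mul c)).congr_deriv ?_
  ring

lemma strictMonoOn_sub_div (hc : 0 ≤ c) : StrictMonoOn (fun x ↦ x - c / x) (Ioi 0) := by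
  intro x hx y _ hxy
  have : c / y ≤ c / x := div_le_div_of_nonneg_left hc hx hxy.le
  dsimp only
  linarith

lemma image_sub_div_Ioi (hc : 0 < c) : (fun x ↦ x - c / x) '' Ioi 0 = univ := by
  refine eq_univ_of_forall fun u ↦ ?_
  have sq_root : √(u ^ 2 + 4 * c) ^ 2 = u ^ 2 + 4 * c := sq_sqrt (by positivity)
  have root_pos : 0 < u + √(u ^ 2 + 4 * c) := by
    have : |u| < √(u ^ 2 + 4 * c) := by
      rw [← sqrt_sq_eq_abs]
      exact sqrt_lt_sqrt (sq_nonneg u) (by linarith)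
    linarith [neg_abs_le u]
  refine ⟨(u + √(u ^ 2 + 4 * c)) / 2, half_pos root_pos, ?_⟩
  field_simp
  linear_combination sq_root

lemma image_const_div_Ioi (hc : 0 < c) : (fun x ↦ c / x) '' Ioi 0 = Ioi 0 := by
  ext y
  constructor
  · rintro ⟨x, hx, rfl⟩
    exact div_pos hc hx
  · exact fun hy ↦ ⟨c / y, div_pos hc hy, div_div_cancel₀ hc.ne'⟩

lemma integral_Ioi_comp_const_div (hc : 0 < c) (f : ℝ → E) :
    ∫ x in Ioi 0, (c / x ^ 2) • f (c / x) = ∫ x in Ioi 0, f x := by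
  have deriv_div : ∀ x ∈ Ioi (0 : ℝ),
      HasDerivWithinAt (fun x ↦ c / x) (-(c / x ^ 2)) (Ioi 0) x := fun x hx ↦
    (((hasDerivAt_inv (ne_of_gt hx)).const_mul c).congr_deriv (by ring)).hasDerivWithinAt
  have inj : InjOn (fun x ↦ c / x) (Ioi 0) := fun x _ y _ hxy ↦
    inv_injective (mul_left_cancel₀ hc.ne' (by simpa only [div_eq_mul_inv] using hxy))
  have h := integral_image_eq_integral_abs_deriv_smul measurableSet_Ioi deriv_div inj f
  simpa only [image_const_div_Ioi hc, abs_neg, abs_div, abs_of_pos hc, abs_sq] using h.symm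

lemma integrableOn_Ioi_deriv_smul_comp_sub_div (hc : 0 < c) (hf : Integrable f) :
    IntegrableOn (fun x ↦ (1 + c / x ^ 2) • f (x - c / x)) (Ioi 0) := by
  have abs_deriv (x : ℝ) : |1 + c / x ^ 2| = 1 + c / x ^ 2 := abs_of_nonneg (by positivity)
  have h := integrableOn_image_iff_integrableOn_abs_deriv_smul measurableSet_Ioi
    (fun x hx ↦ (hasDerivAt_sub_div c (ne_of_gt hx)).hasDerivWithinAt)
    (strictMonoOn_sub_div hc.le).injOn f
  simp only [image_sub_div_Ioi hc, integrableOn_univ, abs_deriv] at h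
  exact h.mp hf

lemma integral_Ioi_deriv_smul_comp_sub_div (hc : 0 < c) (f : ℝ → E) :
    ∫ x in Ioi 0, (1 + c / x ^ 2) • f (x - c / x) = ∫ x, f x := by
  have abs_deriv (x : ℝ) : |1 + c / x ^ 2| = 1 + c / x ^ 2 := abs_of_nonneg (by positivity)
  have h := integral_image_eq_integral_abs_deriv_smul measurableSet_Ioi
    (fun x hx ↦ (hasDerivAt_sub_div c (ne_of_gt hx)).hasDerivWithinAt)
    (strictMonoOn_sub_div hc.le).injOn f
  simpa only [image_sub_div_Ioi hc, setIntegral_univ, abs_deriv] using h.symm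

lemma integrableOn_Ioi_comp_sub_div (hc : 0 < c) (hf : Integrable f) :
    IntegrableOn (fun x ↦ f (x - c / x)) (Ioi 0) := by
  have inv_le_one (x : ℝ) : ‖(1 + c / x ^ 2)⁻¹‖ ≤ 1 := by
    have one_le : 1 ≤ 1 + c / x ^ 2 := le_add_of_nonneg_right (by positivity)
    rw [norm_inv]
    exact inv_le_one_of_one_le₀ (one_le.trans (le_norm_self _))
  have h := (integrableOn_Ioi_deriv_smul_comp_sub_div hc hf).bdd_smul (𝕜 := ℝ) 1
    (φ := fun x ↦ (1 + c / x ^ 2)⁻¹) (Measurable.aestronglyMeasurable (by fun_prop))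
    (.of_forall inv_le_one)
  refine h.congr (.of_forall fun x ↦ inv_smul_smul₀ ?_ _)
  positivity

/- The inversion `x ↦ c / x` reverses the sign of `x - c / x`, so for even `f` the two halves of
the weight `1 + c / x²` contribute equally. -/
lemma two_smul_integral_Ioi_comp_sub_div (hc : 0 < c) (hf : Integrable f) (even : f.Even) :
    (2 : ℝ) • ∫ x in Ioi 0, f (x - c / x) = ∫ x, f x := by
  have int_comp := integrableOn_Ioi_comp_sub_div hc hf
  have int_weighted : IntegrableOn (fun x ↦ (c / x ^ 2) • f (x - c / x)) (Ioi 0) := by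
    refine ((integrableOn_Ioi_deriv_smul_comp_sub_div hc hf).sub int_comp).congr
      (.of_forall fun x ↦ ?_)
    simp only [Pi.sub_apply, add_smul, one_smul, add_sub_cancel_left]
  have inversion : ∫ x in Ioi 0, (c / x ^ 2) • f (x - c / x) = ∫ x in Ioi 0, f (x - c / x) := by
    rw [← integral_Ioi_comp_const_div hc fun x ↦ f (x - c / x)]
    simp only [div_div_cancel₀ hc.ne', ← even (_ - c / _), neg_sub]
  calc (2 : ℝ) • ∫ x in Ioi 0, f (x - c / x)
      = ∫ x in Ioi 0, (f (x - c / x) + (c / x ^ 2) • f (x - c / x)) := by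
        rw [integral_add int_comp int_weighted, inversion, two_smul]
    _ = ∫ x in Ioi 0, (1 + c / x ^ 2) • f (x - c / x) := by simp only [add_smul, one_smul]
    _ = ∫ x, f x := integral_Ioi_deriv_smul_comp_sub_div hc f

end CauchySchlomilch

section Gaussian

variable {p c : ℝ}

lemma exp_neg_mul_sq_add_div_sq (p c : ℝ) {x : ℝ} (hx : x ≠ 0) :
    exp (-p * (x ^ 2 + c ^ 2 / x ^ 2)) = exp (-2 * p * c) * exp (-p * (x - c / x) ^ 2) := by
  rw [← exp_add]
  congr 1
  field_simp
  ring

lemma integrableOn_Ioi_exp_neg_mul_sq_add_div_sq (hp : 0 < p) (hc : 0 ≤ c) :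
    IntegrableOn (fun x ↦ exp (-p * (x ^ 2 + c ^ 2 / x ^ 2))) (Ioi 0) := by
  have gaussian := integrable_exp_neg_mul_sq hp
  have shifted : IntegrableOn (fun x ↦ exp (-p * (x - c / x) ^ 2)) (Ioi 0) := by
    rcases hc.eq_or_lt with rfl | hc
    · simpa only [zero_div, sub_zero] using gaussian.integrableOn
    · exact integrableOn_Ioi_comp_sub_div hc gaussian
  exact IntegrableOn.congr_fun (shifted.const_mul (exp (-2 * p * c)))
    (fun x hx ↦ (exp_neg_mul_sq_add_div_sq p c (ne_of_gt hx)).symm) measurableSet_Ioi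

lemma integral_Ioi_exp_neg_mul_sq_add_div_sq (hp : 0 < p) (hc : 0 ≤ c) :
    ∫ x in Ioi 0, exp (-p * (x ^ 2 + c ^ 2 / x ^ 2)) = exp (-2 * p * c) * (√(π / p) / 2) := by
  have shifted : ∫ x in Ioi 0, exp (-p * (x - c / x) ^ 2) = √(π / p) / 2 := by
    rcases hc.eq_or_lt with rfl | hc
    · simpa only [zero_div, sub_zero] using integral_gaussian_Ioi p
    · have h := two_smul_integral_Ioi_comp_sub_div hc (integrable_exp_neg_mul_sq hp)
        fun x ↦ by rw [neg_sq]
      rw [integral_gaussian, smul_eq_mul] at h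
      linarith
  rw [setIntegral_congr_fun measurableSet_Ioi
    fun x hx ↦ exp_neg_mul_sq_add_div_sq p c (ne_of_gt hx), integral_const_mul, shifted]

end Gaussian

section QuadraticSubstitution

variable {E : Type*} [NormedAddCommGroup E] [NormedSpace ℝ E] {m : ℝ}

lemma hasDerivAt_add_mul_sq (d m y : ℝ) : HasDerivAt (fun y ↦ d + m * y ^ 2) (2 * m * y) y :=
  (((hasDerivAt_pow 2 y).const_mul m).const_add d).congr_deriv (by ring)

lemma strictMonoOn_add_mul_sq (d : ℝ) (hm : 0 < m) :
    StrictMonoOn (fun y ↦ d + m * y ^ 2) (Ici 0) := by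
  intro x hx y _ hxy
  have : x ^ 2 < y ^ 2 := pow_lt_pow_left₀ hxy hx two_ne_zero
  dsimp only
  gcongr

lemma image_add_mul_sq_Ioi (d : ℝ) (hm : 0 < m) :
    (fun y ↦ d + m * y ^ 2) '' Ioi 0 = Ioi d := by
  have top : Filter.Tendsto (fun y : ℝ ↦ d + m * y ^ 2) .atTop .atTop :=
    Filter.tendsto_atTop_add_const_left _ d
      ((Filter.tendsto_pow_atTop two_ne_zero).const_mul_atTop hm)
  have h := ContinuousOn.image_Ioi_of_strictMonoOn (by fun_prop)
    (strictMonoOn_add_mul_sq d hm) top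
  simpa using h

lemma integrableOn_Ioi_iff_comp_add_mul_sq (d : ℝ) (hm : 0 < m) (f : ℝ → E) :
    IntegrableOn f (Ioi d) ↔
      IntegrableOn (fun y ↦ (2 * m * y) • f (d + m * y ^ 2)) (Ioi 0) := by
  rw [← image_add_mul_sq_Ioi d hm, integrableOn_image_iff_integrableOn_abs_deriv_smul
    measurableSet_Ioi (fun y _ ↦ (hasDerivAt_add_mul_sq d m y).hasDerivWithinAt)
    ((strictMonoOn_add_mul_sq d hm).injOn.mono Ioi_subset_Ici_self)]
  exact integrableOn_congr_fun (fun y (hy : 0 < y) ↦ by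
    simp only [abs_of_pos (show 0 < 2 * m * y by positivity)]) measurableSet_Ioi

lemma integral_Ioi_eq_comp_add_mul_sq (d : ℝ) (hm : 0 < m) (f : ℝ → E) :
    ∫ x in Ioi d, f x = ∫ y in Ioi 0, (2 * m * y) • f (d + m * y ^ 2) := by
  rw [← image_add_mul_sq_Ioi d hm, integral_image_eq_integral_abs_deriv_smul
    measurableSet_Ioi (fun y _ ↦ (hasDerivAt_add_mul_sq d m y).hasDerivWithinAt)
    ((strictMonoOn_add_mul_sq d hm).injOn.mono Ioi_subset_Ici_self)]
  exact setIntegral_congr_fun measurableSet_Ioi fun y (hy : 0 < y) ↦ by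
    simp only [abs_of_pos (show 0 < 2 * m * y by positivity)]

end QuadraticSubstitution

lemma metropolis_weight_comp_add_mul_sq {β : ℝ} (hβ : β ≠ 0) (σ ω : ℝ) {x y : ℝ} (hy : 0 < y)
    (hx : x = β * σ ^ 2 / 2 + β / 2 * y ^ 2) :
    (2 * (β / 2) * y) • ((1 / (√(2 * π) * √(2 * x / β - σ ^ 2))) *
        exp (-(β * x) / 4 - ω ^ 2 / (2 * (2 * x / β - σ ^ 2)))) =
      β / √(2 * π) * exp (-(σ ^ 2 * β ^ 2) / 8) *
        exp (-(β ^ 2 / 8) * (y ^ 2 + (2 * |ω| / β) ^ 2 / y ^ 2)) := by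
  have variance : 2 * x / β - σ ^ 2 = y ^ 2 := by
    rw [hx]
    field_simp
    ring
  have exponent : -(β * x) / 4 - ω ^ 2 / (2 * y ^ 2) =
      -(σ ^ 2 * β ^ 2) / 8 + -(β ^ 2 / 8) * (y ^ 2 + (2 * |ω| / β) ^ 2 / y ^ 2) := by
    rw [hx, div_pow, mul_pow, sq_abs]
    field_simp
    ring
  rw [variance, sqrt_sq hy.le, exponent, exp_add, smul_eq_mul]
  field_simp

/-- The Metropolis frequency-weight integral: for `β, σ > 0` and `ω ∈ ℝ`,
`∫_{βσ²/2}^∞ (√(2π)·√(2x/β − σ²))⁻¹ exp(−βx/4 − ω²/(2(2x/β − σ²))) dx`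
converges and equals `e^{−σ²β²/8} e^{−|ω|β/2}`. -/
theorem metropolis_weight_integral (β σ ω : ℝ) (hβ : 0 < β) (hσ : 0 < σ) :
    IntegrableOn
      (fun x : ℝ => (1 / (Real.sqrt (2 * Real.pi) * Real.sqrt (2 * x / β - σ ^ 2))) *
        Real.exp (-(β * x) / 4 - ω ^ 2 / (2 * (2 * x / β - σ ^ 2))))
      (Set.Ioi (β * σ ^ 2 / 2)) volume ∧
    ∫ x in Set.Ioi (β * σ ^ 2 / 2),
        (1 / (Real.sqrt (2 * Real.pi) * Real.sqrt (2 * x / β - σ ^ 2))) *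
          Real.exp (-(β * x) / 4 - ω ^ 2 / (2 * (2 * x / β - σ ^ 2))) =
      Real.exp (-(σ ^ 2 * β ^ 2) / 8) * Real.exp (-(|ω| * β) / 2) := by
  have p_pos : 0 < β ^ 2 / 8 := by positivity
  have c_nonneg : 0 ≤ 2 * |ω| / β := by positivity
  have substitution := fun y (hy : y ∈ Ioi (0 : ℝ)) ↦
    metropolis_weight_comp_add_mul_sq hβ.ne' σ ω (mem_Ioi.mp hy) rfl
  constructor
  · rw [integrableOn_Ioi_iff_comp_add_mul_sq _ (half_pos hβ),
      integrableOn_congr_fun substitution measurableSet_Ioi]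
    exact (integrableOn_Ioi_exp_neg_mul_sq_add_div_sq p_pos c_nonneg).const_mul _
  · have gaussian_scale : √(π / (β ^ 2 / 8)) = 2 * √(2 * π) / β := by
      rw [show π / (β ^ 2 / 8) = (2 / β) ^ 2 * (2 * π) by field_simp; ring,
        sqrt_mul (sq_nonneg _), sqrt_sq (by positivity)]
      ring
    have exponent : -2 * (β ^ 2 / 8) * (2 * |ω| / β) = -(|ω| * β) / 2 := by
      field_simp
      ring
    rw [integral_Ioi_eq_comp_add_mul_sq _ (half_pos hβ),
      setIntegral_congr_fun measurableSet_Ioi substitution, integral_const_mul,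
      integral_Ioi_exp_neg_mul_sq_add_div_sq p_pos c_nonneg, gaussian_scale, exponent]
    field_simp
end

section
/- Fix n ≥ 1 and a finite type κ. For s : Fin n → Fin 4 let P_s denote the n-qubit Pauli string, i.e. the 2ⁿ×2ⁿ matrix indexed by (Fin n → Fin 2) whose (x,y) entry is ∏_{i} (σ_{s i})_{x i, y i}, where σ₀, σ₁, σ₂, σ₃ are the identity and the Pauli matrices X, Y, Z. Then for every complex matrix M indexed by ((Fin n → Fin 2) × κ): M − 2^{−n} · (I_{2ⁿ} ⊗ Tr_q M) = 2^{−(2n+1)} · Σ_{s ≠ (const 0)} [P_s ⊗ I_κ, [P_s ⊗ I_κ, M]], where Tr_q M is the partial trace over the qubit factor, i.e. the κ×κ matrix with entries (Tr_q M)(b,b') := Σ_{a} M((a,b),(a,b')), ⊗ is the Kronecker product, I denotes identity matrices, [X,Y] := XY − YX, and the sum ranges over all nontrivial Pauli strings s. -/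
open Matrix
open scoped Kronecker

noncomputable section

/-- The single-qubit Pauli matrices: `σ₀ = I`, `σ₁ = X`, `σ₂ = Y`, `σ₃ = Z`. -/
def pauli : Fin 4 → Matrix (Fin 2) (Fin 2) ℂ
  | 0 => !![1, 0; 0, 1]
  | 1 => !![0, 1; 1, 0]
  | 2 => !![0, -Complex.I; Complex.I, 0]
  | 3 => !![1, 0; 0, -1]

/-- The `n`-qubit Pauli string `P_s = σ_{s 1} ⊗ ⋯ ⊗ σ_{s n}` for `s : Fin n → Fin 4`,
as a `2ⁿ×2ⁿ` matrix indexed by `Fin n → Fin 2`. -/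
def pauliString {n : ℕ} (s : Fin n → Fin 4) :
    Matrix (Fin n → Fin 2) (Fin n → Fin 2) ℂ :=
  Matrix.of fun x y => ∏ i : Fin n, pauli (s i) (x i) (y i)

/-- The partial trace over the qubit register:
`(Tr_q M)(b,b') := Σ_a M((a,b),(a,b'))`. -/
def partialTraceQubits {n : ℕ} {κ : Type*} [Fintype κ]
    (M : Matrix ((Fin n → Fin 2) × κ) ((Fin n → Fin 2) × κ) ℂ) : Matrix κ κ ℂ :=
  Matrix.of fun b b' => ∑ a : Fin n → Fin 2, M (a, b) (a, b')

end

/-!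
Every Pauli string `P` is an involution, so `[P, [P, M]] = 2 (M - P M P)`. The Fierz identity
`∑ k, σ_k ⊗ σ_k = 2 • swap` is multiplicative over tensor factors, hence
`∑ s, P_s ⊗ P_s = 2 ^ n • swap`: summing `P_s M P_s` over all `4 ^ n` strings traces out the
register. The trivial string contributes no commutator, so it may be included in the sum.
-/

section PiKronecker

variable {ι R : Type*} [Fintype ι]

/-- The Kronecker product `⨂ i, A i` of a finite family of matrices. Its rows and columns are
indexed by functions, so that no order on `ι` and no bracketing of the factors has to be chosen. -/
def piKronecker [CommMonoid R] {l m : ι → Type*} (A : ∀ i, Matrix (l i) (m i) R) :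
    Matrix (∀ i, l i) (∀ i, m i) R :=
  of fun x y => ∏ i, A i (x i) (y i)

theorem piKronecker_apply [CommMonoid R] {l m : ι → Type*} (A : ∀ i, Matrix (l i) (m i) R)
    (x : ∀ i, l i) (y : ∀ i, m i) : piKronecker A x y = ∏ i, A i (x i) (y i) :=
  rfl

theorem piKronecker_one [CommMonoidWithZero R] {m : ι → Type*} [∀ i, DecidableEq (m i)] :
    piKronecker (fun i => (1 : Matrix (m i) (m i) R)) = 1 := by
  ext x y
  simp only [piKronecker_apply, one_apply, Fintype.prod_ite_zero, Finset.prod_const_one, funext_iff]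

theorem piKronecker_mul_piKronecker [DecidableEq ι] [CommSemiring R] {l m o : ι → Type*}
    [∀ i, Fintype (m i)] (A : ∀ i, Matrix (l i) (m i) R) (B : ∀ i, Matrix (m i) (o i) R) :
    piKronecker A * piKronecker B = piKronecker fun i => A i * B i := by
  ext x y
  simp only [mul_apply, piKronecker_apply, ← Finset.prod_mul_distrib, Fintype.prod_sum]

end PiKronecker

/-- The Fierz completeness relation `∑ k, E k ⊗ E k = c • swap` for a family of square matrices,
written in entries. It says that twirling by the family, `A ↦ ∑ k, E k * A * E k`, sends every `A`
to `c * trace A` times the identity. -/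
def IsFierzComplete {ι m R : Type*} [Fintype ι] [DecidableEq m] [CommSemiring R]
    (E : ι → Matrix m m R) (c : R) : Prop :=
  ∀ x a b y, ∑ k, E k x a * E k b y = c * ((1 : Matrix m m R) x y * (1 : Matrix m m R) a b)

theorem IsFierzComplete.piKronecker {ι R : Type*} [Fintype ι] [DecidableEq ι] [CommSemiring R]
    {K m : ι → Type*} [∀ i, Fintype (K i)] [∀ i, DecidableEq (m i)]
    {E : ∀ i, K i → Matrix (m i) (m i) R} {c : ι → R} (hE : ∀ i, IsFierzComplete (E i) (c i)) :
    IsFierzComplete (fun s : ∀ i, K i => piKronecker fun i => E i (s i)) (∏ i, c i) := by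
  intro x a b y
  calc ∑ s : ∀ i, K i, (∏ i, E i (s i) (x i) (a i)) * ∏ i, E i (s i) (b i) (y i)
      = ∏ i, ∑ k, E i k (x i) (a i) * E i k (b i) (y i) := by
        simp only [← Finset.prod_mul_distrib, Fintype.prod_sum]
    _ = ∏ i, c i * ((1 : Matrix (m i) (m i) R) (x i) (y i) *
          (1 : Matrix (m i) (m i) R) (a i) (b i)) :=
        Finset.prod_congr rfl fun i _ => hE i (x i) (a i) (b i) (y i)
    _ = (∏ i, c i) * ((1 : Matrix (∀ i, m i) (∀ i, m i) R) x y *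
          (1 : Matrix (∀ i, m i) (∀ i, m i) R) a b) := by
        simp only [Finset.prod_mul_distrib, ← piKronecker_apply, piKronecker_one]

theorem trace_comp_symm_apply {m κ μ R : Type*} [Fintype m] [AddCommMonoid R]
    (M : Matrix (m × κ) (m × μ) R) (i : κ) (j : μ) :
    trace ((comp m m κ μ R).symm M) i j = ∑ a, M (a, i) (a, j) := by
  rw [trace, Matrix.sum_apply]
  rfl

theorem kronecker_one_mul_mul_kronecker_one_apply {l m n o κ μ R : Type*} [Fintype m] [Fintype n]
    [Fintype κ] [DecidableEq κ] [Fintype μ] [DecidableEq μ] [CommSemiring R]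
    (A : Matrix l m R) (M : Matrix (m × κ) (n × μ) R) (B : Matrix n o R) (p : l × κ) (q : o × μ) :
    (A ⊗ₖ (1 : Matrix κ κ R) * M * B ⊗ₖ (1 : Matrix μ μ R)) p q =
      ∑ b, ∑ a, A p.1 a * B b q.1 * M (a, p.2) (b, q.2) := by
  simp only [mul_apply, Fintype.sum_prod_type, kroneckerMap_apply, one_apply, mul_ite, mul_one,
    mul_zero, ite_mul, zero_mul, Finset.sum_ite_eq, Finset.sum_ite_eq', Finset.mem_univ, if_true,
    Finset.sum_mul, mul_right_comm]

section Twirl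

variable {ι m κ R : Type*} [Fintype ι] [Fintype m] [DecidableEq m] [Fintype κ] [DecidableEq κ]

theorem IsFierzComplete.sum_kronecker_one_mul_mul_kronecker_one [CommSemiring R]
    {E : ι → Matrix m m R} {c : R} (hE : IsFierzComplete E c) (M : Matrix (m × κ) (m × κ) R) :
    ∑ k, E k ⊗ₖ (1 : Matrix κ κ R) * M * E k ⊗ₖ (1 : Matrix κ κ R) =
      c • ((1 : Matrix m m R) ⊗ₖ trace ((comp m m κ κ R).symm M)) := by
  ext ⟨x, i⟩ ⟨y, j⟩
  calc (∑ k, E k ⊗ₖ (1 : Matrix κ κ R) * M * E k ⊗ₖ (1 : Matrix κ κ R)) (x, i) (y, j)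
      = ∑ b, ∑ a, (∑ k, E k x a * E k b y) * M (a, i) (b, j) := by
        simp only [Matrix.sum_apply, kronecker_one_mul_mul_kronecker_one_apply, Finset.sum_mul]
        rw [Finset.sum_comm]
        exact Finset.sum_congr rfl fun b _ => Finset.sum_comm
    _ = c * ((1 : Matrix m m R) x y * ∑ b, M (b, i) (b, j)) := by
        simp only [hE x _ _ y, one_apply, mul_ite, mul_one, mul_zero, ite_mul, one_mul,
          zero_mul, Finset.sum_ite_eq', Finset.mem_univ, if_true, Finset.mul_sum]
    _ = (c • ((1 : Matrix m m R) ⊗ₖ trace ((comp m m κ κ R).symm M))) (x, i) (y, j) := by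
        rw [Matrix.smul_apply, smul_eq_mul, kroneckerMap_apply, trace_comp_symm_apply]

theorem lie_lie_of_mul_self_eq_one {A : Type*} [Ring A] {p : A} (hp : p * p = 1) (a : A) :
    ⁅p, ⁅p, a⁆⁆ = 2 • (a - p * a * p) := by
  calc ⁅p, ⁅p, a⁆⁆
      = p * p * a + a * (p * p) - 2 • (p * a * p) := by
        simp only [Ring.lie_def]
        noncomm_ring
    _ = 2 • (a - p * a * p) := by
        rw [hp]
        noncomm_ring

theorem IsFierzComplete.sum_lie_lie_kronecker_one [CommRing R] {E : ι → Matrix m m R} {c : R}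
    (hE : IsFierzComplete E c) (hsq : ∀ k, E k * E k = 1) (M : Matrix (m × κ) (m × κ) R) :
    ∑ k, ⁅E k ⊗ₖ (1 : Matrix κ κ R), ⁅E k ⊗ₖ (1 : Matrix κ κ R), M⁆⁆ =
      2 • (Fintype.card ι • M -
        c • ((1 : Matrix m m R) ⊗ₖ trace ((comp m m κ κ R).symm M))) := by
  have hsq_kronecker (k : ι) :
      E k ⊗ₖ (1 : Matrix κ κ R) * E k ⊗ₖ (1 : Matrix κ κ R) = 1 := by
    rw [← mul_kronecker_mul, hsq, one_mul, one_kronecker_one]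
  simp only [lie_lie_of_mul_self_eq_one (hsq_kronecker _), ← Finset.smul_sum,
    Finset.sum_sub_distrib, Finset.sum_const, Finset.card_univ,
    hE.sum_kronecker_one_mul_mul_kronecker_one]

end Twirl

theorem pauli_zero : pauli 0 = 1 :=
  one_fin_two.symm

theorem pauli_mul_self (k : Fin 4) : pauli k * pauli k = 1 := by
  fin_cases k <;> simp [pauli, one_fin_two]

theorem isFierzComplete_pauli : IsFierzComplete pauli 2 := by
  intro x a b y
  fin_cases x <;> fin_cases a <;> fin_cases b <;> fin_cases y <;>
    simp [pauli, Fin.sum_univ_four, one_add_one_eq_two]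

theorem pauliString_eq_piKronecker {n : ℕ} (s : Fin n → Fin 4) :
    pauliString s = piKronecker fun i => pauli (s i) :=
  rfl

theorem pauliString_zero {n : ℕ} : pauliString (fun _ : Fin n => 0) = 1 := by
  simp only [pauliString_eq_piKronecker, pauli_zero, piKronecker_one]

theorem pauliString_mul_self {n : ℕ} (s : Fin n → Fin 4) : pauliString s * pauliString s = 1 := by
  simp only [pauliString_eq_piKronecker, piKronecker_mul_piKronecker, pauli_mul_self,
    piKronecker_one]

theorem isFierzComplete_pauliString (n : ℕ) :
    IsFierzComplete (pauliString : (Fin n → Fin 4) → _) (2 ^ n) := by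
  have tensor_power := IsFierzComplete.piKronecker fun _ : Fin n => isFierzComplete_pauli
  rwa [Finset.prod_const, Finset.card_univ, Fintype.card_fin] at tensor_power

theorem partialTraceQubits_eq_trace_comp_symm {n : ℕ} {κ : Type*} [Fintype κ]
    (M : Matrix ((Fin n → Fin 2) × κ) ((Fin n → Fin 2) × κ) ℂ) :
    partialTraceQubits M = trace ((comp _ _ κ κ ℂ).symm M) := by
  ext i j
  exact (trace_comp_symm_apply M i j).symm

/-- The deviation of `M` from "maximally mixed on the qubit register tensored with its
partial trace" equals `2^{−(2n+1)}` times the sum of double commutators with all nontrivial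
Pauli strings (tensored with the identity on the ancilla register `κ`). -/
theorem sub_maximallyMixed_eq_sum_double_commutator {n : ℕ} (hn : 1 ≤ n)
    {κ : Type*} [Fintype κ] [DecidableEq κ]
    (M : Matrix ((Fin n → Fin 2) × κ) ((Fin n → Fin 2) × κ) ℂ) :
    M - ((2 : ℂ) ^ n)⁻¹ •
        ((1 : Matrix (Fin n → Fin 2) (Fin n → Fin 2) ℂ) ⊗ₖ partialTraceQubits M) =
      ((2 : ℂ) ^ (2 * n + 1))⁻¹ •
        ∑ s ∈ Finset.univ.filter (fun s : Fin n → Fin 4 => s ≠ fun _ => 0),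
          (pauliString s ⊗ₖ (1 : Matrix κ κ ℂ) *
              (pauliString s ⊗ₖ (1 : Matrix κ κ ℂ) * M - M * pauliString s ⊗ₖ (1 : Matrix κ κ ℂ)) -
            (pauliString s ⊗ₖ (1 : Matrix κ κ ℂ) * M - M * pauliString s ⊗ₖ (1 : Matrix κ κ ℂ)) *
              pauliString s ⊗ₖ (1 : Matrix κ κ ℂ)) := by
  simp only [← Ring.lie_def]
  have ne_zero_of_lie_lie_ne_zero (s : Fin n → Fin 4)
      (hs : ⁅pauliString s ⊗ₖ (1 : Matrix κ κ ℂ), ⁅pauliString s ⊗ₖ (1 : Matrix κ κ ℂ), M⁆⁆ ≠ 0) :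
      s ≠ fun _ => 0 := by
    rintro rfl
    simp [pauliString_zero, Ring.lie_def] at hs
  have card_strings : (Fintype.card (Fin n → Fin 4) : ℂ) = 2 ^ n * 2 ^ n := by
    norm_num [← mul_pow]
  rw [Finset.sum_filter_of_ne fun s _ => ne_zero_of_lie_lie_ne_zero s,
    (isFierzComplete_pauliString n).sum_lie_lie_kronecker_one pauliString_mul_self,
    partialTraceQubits_eq_trace_comp_symm, ← Nat.cast_smul_eq_nsmul ℂ (Fintype.card _),
    card_strings]
  match_scalars <;> field_simp <;> ring
end
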